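/- arXiv:2212.00604 — 2 statements merged into one kernel-verified Lean document; each statement's English description precedes it below -/
import Mathlib

section
/- Fix n_{⋆,1}, n_{⋆,2}, n_{⋆,3} ∈ ℤ² and reals N₁, N₂, N₃ ≥ 1, and let N_max ≥ N_med ≥ N_min be the nonincreasing rearrangement of (N₁,N₂,N₃). Let h : (ℤ²)⁴ → {0,1} be the tensor h_{n n₁ n₂ n₃} := 1 if n = n₁ − n₂ + n₃, n₂ ≠ n₁, n₂ ≠ n₃, and N_j ≤ ⟨n_j − n_{⋆,j}⟩ ≤ 2N_j for j = 1,2,3, and h_{n n₁ n₂ n₃} := 0 otherwise. For m ∈ ℤ let h^m be the tensor h^m_{n n₁ n₂ n₃} := h_{n n₁ n₂ n₃} · 1[κ(n,n₁,n₂,n₃) = m], where κ(n,n₁,n₂,n₃) := ⟨n⟩² − ⟨n₁⟩² + ⟨n₂⟩² − ⟨n₃⟩². Then for every θ > 0 there exists C = C(θ) > 0, independent of n_{⋆,1}, n_{⋆,2}, n_{⋆,3}, of N₁, N₂, N₃, and of m, such that sup_{m∈ℤ} ‖h^m‖₁ ≤ C · N_max^{1/2+θ} · N_med^{1/2}, where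 ‖h‖₁ := max( ‖h‖_{n→n₁n₂n₃}, ‖h‖_{n₁→nn₂n₃}, ‖h‖_{nn₂→n₁n₃}, ‖h‖_{nn₃→n₁n₂} ). -/
/-!
On the support of the tensor `κ = 2 (n₂ - n₁)·(n₂ - n₃)`, so fixing `κ = m` prescribes an inner
product of two nonzero lattice vectors. By the Schur test (`schur_test`), the square of each
operator norm is at most the product of the largest numbers of nonzero entries in a column and in a
row of the corresponding matrix, and it remains to count lattice points, uniformly in the centres.

* For `nn₂ → n₁n₃` and `nn₃ → n₁n₂`, the free point lies on a circle, respectively on a line, inside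
  a box of side `O(N_j)`, which leaves `O(N_j)` possibilities (`circle_count`, `line_count`).
* For `n → n₁n₂n₃` and `n₁ → nn₂n₃`, each row has at most one nonzero entry, and a column is counted
  by pairs `(s, t)` of points in two boxes with `x·z = k`, where `x = s - α` and `z = t - σs - β`
  with `σ ∈ {0, 1}`. Writing `x₁z₁ + x₂z₂ = k` and fixing the coordinates entering one product, the
  other two coordinates satisfy `x₂z₂ = K`. If `K ≠ 0` there are `O(N^ε)` solutions in a box of side
  `N`, wherever that box is: three lattice points on a hyperbola span a triangle of area at least
  `1/2`, which forces `|K| ≤ N⁶` (up to constants), and then the divisor bound applies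
  (`hyperbola_count`). The degenerate pairs `x₁z₁ = x₂z₂ = 0` are few since `x` and `z` are nonzero.
-/

noncomputable section

open scoped ENNReal

/-- `⟨n⟩² = 1 + |n|²` for `n ∈ ℤ²`. -/
def jbSq (n : ℤ × ℤ) : ℝ := 1 + (n.1 : ℝ) ^ 2 + (n.2 : ℝ) ^ 2

/-- `⟨n⟩` for `n ∈ ℤ²`. -/
def jbZ (n : ℤ × ℤ) : ℝ := Real.sqrt (jbSq n)

/-- `⟨n⟩² = 1 + |n|²` as an integer. -/
def jbSqInt (n : ℤ × ℤ) : ℤ := 1 + n.1 ^ 2 + n.2 ^ 2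

/-- The Schrödinger phase `κ(n,n₁,n₂,n₃) = ⟨n⟩² − ⟨n₁⟩² + ⟨n₂⟩² − ⟨n₃⟩²`. -/
def kappa (n n₁ n₂ n₃ : ℤ × ℤ) : ℤ :=
  jbSqInt n - jbSqInt n₁ + jbSqInt n₂ - jbSqInt n₃

/-- The base tensor `h_{n n₁ n₂ n₃}`: the indicator (with values in `{0,1}`) of
`n = n₁ − n₂ + n₃`, `n₂ ≠ n₁`, `n₂ ≠ n₃` and `N_j ≤ ⟨n_j − n_{⋆,j}⟩ ≤ 2N_j`, `j = 1,2,3`. -/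
def hTensor (a₁ a₂ a₃ : ℤ × ℤ) (N₁ N₂ N₃ : ℝ) (n n₁ n₂ n₃ : ℤ × ℤ) : ℂ :=
  if n = n₁ - n₂ + n₃ ∧ n₂ ≠ n₁ ∧ n₂ ≠ n₃ ∧
      N₁ ≤ jbZ (n₁ - a₁) ∧ jbZ (n₁ - a₁) ≤ 2 * N₁ ∧
      N₂ ≤ jbZ (n₂ - a₂) ∧ jbZ (n₂ - a₂) ≤ 2 * N₂ ∧
      N₃ ≤ jbZ (n₃ - a₃) ∧ jbZ (n₃ - a₃) ≤ 2 * N₃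
  then 1 else 0

/-- The tensor `h^m = h · 1[κ = m]`, supported on a fixed value `m` of the phase `κ`. -/
def hTensorK (a₁ a₂ a₃ : ℤ × ℤ) (N₁ N₂ N₃ : ℝ) (m : ℤ) (n n₁ n₂ n₃ : ℤ × ℤ) : ℂ :=
  if kappa n n₁ n₂ n₃ = m then hTensor a₁ a₂ a₃ N₁ N₂ N₃ n n₁ n₂ n₃ else 0

/-- The `ℓ²((ℤ²)^B) → ℓ²((ℤ²)^C)` operator norm for the grouping `n → n₁n₂n₃`. -/
def opNorm_n (h : (ℤ × ℤ) → (ℤ × ℤ) → (ℤ × ℤ) → (ℤ × ℤ) → ℂ) : ℝ≥0∞ :=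
  (⨆ (f : (ℤ × ℤ) → ℂ) (_ : (∑' n : ℤ × ℤ, ‖f n‖ ^ 2) = 1),
    ∑' m : (ℤ × ℤ) × (ℤ × ℤ) × (ℤ × ℤ),
      ENNReal.ofReal (‖∑' n : ℤ × ℤ, h n m.1 m.2.1 m.2.2 * f n‖ ^ 2)) ^ ((1 : ℝ) / 2)

/-- Operator norm for the grouping `n₁ → n n₂ n₃`. -/
def opNorm_n1 (h : (ℤ × ℤ) → (ℤ × ℤ) → (ℤ × ℤ) → (ℤ × ℤ) → ℂ) : ℝ≥0∞ :=
  (⨆ (f : (ℤ × ℤ) → ℂ) (_ : (∑' n₁ : ℤ × ℤ, ‖f n₁‖ ^ 2) = 1),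
    ∑' m : (ℤ × ℤ) × (ℤ × ℤ) × (ℤ × ℤ),
      ENNReal.ofReal (‖∑' n₁ : ℤ × ℤ, h m.1 n₁ m.2.1 m.2.2 * f n₁‖ ^ 2)) ^ ((1 : ℝ) / 2)

/-- Operator norm for the grouping `n n₂ → n₁ n₃`. -/
def opNorm_nn2 (h : (ℤ × ℤ) → (ℤ × ℤ) → (ℤ × ℤ) → (ℤ × ℤ) → ℂ) : ℝ≥0∞ :=
  (⨆ (f : (ℤ × ℤ) × (ℤ × ℤ) → ℂ) (_ : (∑' q : (ℤ × ℤ) × (ℤ × ℤ), ‖f q‖ ^ 2) = 1),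
    ∑' m : (ℤ × ℤ) × (ℤ × ℤ),
      ENNReal.ofReal (‖∑' q : (ℤ × ℤ) × (ℤ × ℤ), h q.1 m.1 q.2 m.2 * f q‖ ^ 2)) ^ ((1 : ℝ) / 2)

/-- Operator norm for the grouping `n n₃ → n₁ n₂`. -/
def opNorm_nn3 (h : (ℤ × ℤ) → (ℤ × ℤ) → (ℤ × ℤ) → (ℤ × ℤ) → ℂ) : ℝ≥0∞ :=
  (⨆ (f : (ℤ × ℤ) × (ℤ × ℤ) → ℂ) (_ : (∑' q : (ℤ × ℤ) × (ℤ × ℤ), ‖f q‖ ^ 2) = 1),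
    ∑' m : (ℤ × ℤ) × (ℤ × ℤ),
      ENNReal.ofReal (‖∑' q : (ℤ × ℤ) × (ℤ × ℤ), h q.1 m.1 m.2 q.2 * f q‖ ^ 2)) ^ ((1 : ℝ) / 2)

/-- Operator norm for the grouping `n n₁ → n₂ n₃`. -/
def opNorm_nn1 (h : (ℤ × ℤ) → (ℤ × ℤ) → (ℤ × ℤ) → (ℤ × ℤ) → ℂ) : ℝ≥0∞ :=
  (⨆ (f : (ℤ × ℤ) × (ℤ × ℤ) → ℂ) (_ : (∑' q : (ℤ × ℤ) × (ℤ × ℤ), ‖f q‖ ^ 2) = 1),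
    ∑' m : (ℤ × ℤ) × (ℤ × ℤ),
      ENNReal.ofReal (‖∑' q : (ℤ × ℤ) × (ℤ × ℤ), h q.1 q.2 m.1 m.2 * f q‖ ^ 2)) ^ ((1 : ℝ) / 2)

/-- The norm `‖h‖₁ = max( ‖h‖_{n→n₁n₂n₃}, ‖h‖_{n₁→nn₂n₃}, ‖h‖_{nn₂→n₁n₃}, ‖h‖_{nn₃→n₁n₂} )`. -/
def tNorm1 (h : (ℤ × ℤ) → (ℤ × ℤ) → (ℤ × ℤ) → (ℤ × ℤ) → ℂ) : ℝ≥0∞ :=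
  max (max (opNorm_n h) (opNorm_n1 h)) (max (opNorm_nn2 h) (opNorm_nn3 h))

/-- The norm `‖h‖₂ = max( ‖h‖_{n→n₁n₂n₃}, ‖h‖_{nn₁→n₂n₃} )`. -/
def tNorm2 (h : (ℤ × ℤ) → (ℤ × ℤ) → (ℤ × ℤ) → (ℤ × ℤ) → ℂ) : ℝ≥0∞ :=
  max (opNorm_n h) (opNorm_nn1 h)

/-! ### Cardinality bounds -/

/-- The set `S` has at most `A` elements (in particular it is finite), expressed through its finite
subsets so that no separate finiteness proof is needed. -/
def CardLE {α : Type*} (S : Set α) (A : ℝ) : Prop :=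
  ∀ F : Finset α, (∀ x ∈ F, x ∈ S) → (F.card : ℝ) ≤ A

namespace CardLE

variable {α β : Type*}

lemma nonneg {S : Set α} {A : ℝ} (h : CardLE S A) : 0 ≤ A := by
  simpa using h ∅ (by simp)

lemma mono {S T : Set α} {A B : ℝ} (h : CardLE S A) (hT : ∀ x ∈ T, x ∈ S) (hAB : A ≤ B) :
    CardLE T B :=
  fun F hF => (h F fun x hx => hT x (hF x hx)).trans hAB

/-- A set is at most as large as a bound for its image times a bound for the fibres. -/
lemma fiber {S : Set α} {T : Set β} {A B : ℝ} (g : α → β) (hT : CardLE T A)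
    (hg : ∀ x ∈ S, g x ∈ T) (hB : 0 ≤ B) (hf : ∀ y ∈ T, CardLE {x | x ∈ S ∧ g x = y} B) :
    CardLE S (A * B) := by
  classical
  intro F hF
  have h1 : (F.card : ℝ) = ∑ b ∈ F.image g, ((F.filter fun x => g x = b).card : ℝ) := by
    exact_mod_cast Finset.card_eq_sum_card_fiberwise
      (fun x hx => by simpa using ⟨x, hx, rfl⟩)
  have hTi : ∀ y ∈ F.image g, y ∈ T := by
    intro y hy
    obtain ⟨x, hx, rfl⟩ := Finset.mem_image.1 hy
    exact hg x (hF x hx)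
  rw [h1]
  calc ∑ b ∈ F.image g, ((F.filter fun x => g x = b).card : ℝ)
      ≤ ∑ b ∈ F.image g, B := by
        refine Finset.sum_le_sum fun b hb => hf b (hTi b hb) _ fun x hx => ?_
        rw [Finset.mem_filter] at hx
        exact ⟨hF x hx.1, hx.2⟩
    _ = ((F.image g).card : ℝ) * B := by simp
    _ ≤ A * B := mul_le_mul_of_nonneg_right (hT _ hTi) hB

lemma of_inj {S : Set α} {T : Set β} {A : ℝ} (g : α → β) (hT : CardLE T A)
    (hg : ∀ x ∈ S, g x ∈ T) (hi : ∀ x ∈ S, ∀ y ∈ S, g x = g y → x = y) : CardLE S A := by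
  have := fiber (S := S) (B := 1) g hT hg zero_le_one (fun y _ F hF => by
    have : F.card ≤ 1 := Finset.card_le_one.2 fun a ha b hb =>
      hi a (hF a ha).1 b (hF b hb).1 ((hF a ha).2.trans (hF b hb).2.symm)
    exact_mod_cast this)
  simpa using this

lemma union {S S₁ S₂ : Set α} {A B : ℝ} (h1 : CardLE S₁ A) (h2 : CardLE S₂ B)
    (h : ∀ x ∈ S, x ∈ S₁ ∨ x ∈ S₂) : CardLE S (A + B) := by
  classical
  intro F hF
  have e : F = (F.filter (· ∈ S₁)) ∪ (F.filter (· ∈ S₂)) := by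
    ext x
    simp only [Finset.mem_union, Finset.mem_filter]
    have := fun hx => h x (hF x hx)
    tauto
  have h3 : (F.card : ℝ) ≤ (F.filter (· ∈ S₁)).card + (F.filter (· ∈ S₂)).card := by
    conv_lhs => rw [e]
    exact_mod_cast Finset.card_union_le _ _
  have h4 := h1 (F.filter (· ∈ S₁)) fun x hx => (Finset.mem_filter.1 hx).2
  have h5 := h2 (F.filter (· ∈ S₂)) fun x hx => (Finset.mem_filter.1 hx).2
  linarith

lemma prod {S : Set α} {T : Set β} {A B : ℝ} (h1 : CardLE S A) (h2 : CardLE T B) :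
    CardLE (S ×ˢ T) (A * B) := by
  refine fiber Prod.fst h1 (fun x hx => hx.1) h2.nonneg fun y _ => ?_
  refine of_inj Prod.snd h2 (fun x hx => hx.1.2) fun x hx x' hx' h => ?_
  exact Prod.ext (hx.2.trans hx'.2.symm) h

lemma encard_le {S : Set α} {A : ℝ} (h : CardLE S A) :
    ((S.encard : ℕ∞) : ℝ≥0∞) ≤ ENNReal.ofReal A := by
  rw [← ENNReal.tsum_set_one, ENNReal.tsum_eq_iSup_sum]
  refine iSup_le fun F => ?_
  have := h (F.map (Function.Embedding.subtype _)) fun x hx => by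
    obtain ⟨y, -, rfl⟩ := Finset.mem_map.1 hx
    exact y.2
  rw [Finset.card_map] at this
  simp only [Finset.sum_const, nsmul_eq_mul, mul_one]
  rw [← ENNReal.ofReal_natCast]
  exact ENNReal.ofReal_le_ofReal this

lemma finite {S : Set α} {A : ℝ} (h : CardLE S A) : S.Finite := by
  by_contra hS
  have h1 := h.encard_le
  rw [Set.Infinite.encard_eq hS] at h1
  simp at h1

end CardLE

/-! ### The Schur test -/

/-- Schur test for a kernel with entries of modulus at most `1`: the square of the `ℓ²`
operator norm is at most (largest number of nonzero entries in a column) × (the same for a row). -/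
lemma schur_test {ι μ : Type*} (H : ι → μ → ℂ) (hH : ∀ q m, ‖H q m‖ ≤ 1) {A B : ℝ}
    (hA : ∀ q, CardLE {m | H q m ≠ 0} A) (hB : ∀ m, CardLE {q | H q m ≠ 0} B)
    (hA0 : 0 ≤ A) (f : ι → ℂ) (hf : (∑' q, ‖f q‖ ^ 2) = 1) :
    ∑' m, ENNReal.ofReal (‖∑' q, H q m * f q‖ ^ 2) ≤ ENNReal.ofReal (A * B) := by
  classical
  have hsum : Summable fun q => ‖f q‖ ^ 2 := by
    by_contra h
    rw [tsum_eq_zero_of_not_summable h] at hf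
    exact zero_ne_one hf
  have hf' : ∑' q, ENNReal.ofReal (‖f q‖ ^ 2) = 1 := by
    rw [← ENNReal.ofReal_tsum_of_nonneg (fun q => by positivity) hsum, hf, ENNReal.ofReal_one]
  have key : ∀ m, ENNReal.ofReal (‖∑' q, H q m * f q‖ ^ 2)
      ≤ ENNReal.ofReal B * ∑' q, (if H q m ≠ 0 then 1 else 0) * ENNReal.ofReal (‖f q‖ ^ 2) := by
    intro m
    set F : Finset ι := (hB m).finite.toFinset with hF
    have hmem : ∀ q, q ∈ F ↔ H q m ≠ 0 := fun q => by simp [hF]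
    have h1 : ∑' q, H q m * f q = ∑ q ∈ F, H q m * f q :=
      tsum_eq_sum fun q hq => by
        rw [hmem, not_not] at hq
        simp [hq]
    have h2 : ‖∑ q ∈ F, H q m * f q‖ ≤ ∑ q ∈ F, ‖f q‖ := by
      refine (norm_sum_le _ _).trans (Finset.sum_le_sum fun q _ => ?_)
      rw [norm_mul]
      exact mul_le_of_le_one_left (norm_nonneg _) (hH q m)
    have h3 : ‖∑ q ∈ F, H q m * f q‖ ^ 2 ≤ B * ∑ q ∈ F, ‖f q‖ ^ 2 := by
      calc ‖∑ q ∈ F, H q m * f q‖ ^ 2 ≤ (∑ q ∈ F, ‖f q‖) ^ 2 := by gcongr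
        _ ≤ F.card * ∑ q ∈ F, ‖f q‖ ^ 2 := sq_sum_le_card_mul_sum_sq
        _ ≤ B * ∑ q ∈ F, ‖f q‖ ^ 2 := by
          gcongr
          exact hB m F fun q hq => (hmem q).1 hq
    rw [h1]
    refine (ENNReal.ofReal_le_ofReal h3).trans ?_
    rw [ENNReal.ofReal_mul (hB m).nonneg, ENNReal.ofReal_sum_of_nonneg (fun _ _ => by positivity)]
    gcongr
    refine le_trans (le_of_eq (Finset.sum_congr rfl fun q hq => ?_)) (ENNReal.sum_le_tsum F)
    rw [if_pos ((hmem q).1 hq), one_mul]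
  calc ∑' m, ENNReal.ofReal (‖∑' q, H q m * f q‖ ^ 2)
      ≤ ∑' m, ENNReal.ofReal B *
          ∑' q, (if H q m ≠ 0 then 1 else 0) * ENNReal.ofReal (‖f q‖ ^ 2) :=
        ENNReal.tsum_le_tsum key
    _ = ENNReal.ofReal B *
          ∑' q, (∑' m, (if H q m ≠ 0 then 1 else 0)) * ENNReal.ofReal (‖f q‖ ^ 2) := by
        rw [ENNReal.tsum_mul_left, ENNReal.tsum_comm]
        simp_rw [ENNReal.tsum_mul_right]
    _ ≤ ENNReal.ofReal B * ∑' q, ENNReal.ofReal A * ENNReal.ofReal (‖f q‖ ^ 2) := by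
        gcongr with q
        refine le_trans (le_of_eq ?_) (hA q).encard_le
        rw [← ENNReal.tsum_set_one, tsum_subtype {m | H q m ≠ 0} (fun _ => (1 : ℝ≥0∞))]
        simp [Set.indicator]
    _ = ENNReal.ofReal (A * B) := by
        rw [ENNReal.tsum_mul_left, hf', mul_one, mul_comm, ← ENNReal.ofReal_mul hA0]

/-! ### Lattice points on hyperbolas -/

/-- The divisor bound `d(n) ≪_ε n^ε`. -/
lemma divisor_bound (ε : ℝ) (hε : 0 < ε) :
    ∃ C > (0 : ℝ), ∀ n : ℕ, n ≠ 0 → (n.divisors.card : ℝ) ≤ C * (n : ℝ) ^ ε := by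
  set C₀ : ℝ := 1 + 1 / (ε * Real.log 2) with hC₀
  have hl : 0 < ε * Real.log 2 := mul_pos hε (Real.log_pos one_lt_two)
  have hC1 : 1 ≤ C₀ := by rw [hC₀]; have := one_div_pos.2 hl; linarith
  set P : ℕ := ⌈(2 : ℝ) ^ (1 / ε)⌉₊ with hP
  -- Large primes contribute a factor at most `1`; each of the finitely many small primes at most
  -- `C₀`.
  have hlarge : ∀ p : ℕ, P ≤ p → ∀ a : ℕ, (a : ℝ) + 1 ≤ ((p : ℝ) ^ a) ^ ε := by
    intro p hp a
    have h1 : (2 : ℝ) ^ (1 / ε) ≤ p := (Nat.le_ceil _).trans (by exact_mod_cast hp)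
    have h2 : (2 : ℝ) ≤ (p : ℝ) ^ ε := by
      calc (2 : ℝ) = ((2 : ℝ) ^ (1 / ε)) ^ ε := by
            rw [← Real.rpow_mul (by norm_num), one_div_mul_cancel hε.ne', Real.rpow_one]
        _ ≤ _ := by gcongr
    have h3 : ((p : ℝ) ^ a) ^ ε = ((p : ℝ) ^ ε) ^ a := by
      rw [← Real.rpow_natCast, ← Real.rpow_natCast, ← Real.rpow_mul (by positivity),
        ← Real.rpow_mul (by positivity), mul_comm]
    rw [h3]
    calc (a : ℝ) + 1 ≤ 2 ^ a := by exact_mod_cast Nat.lt_two_pow_self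
      _ ≤ _ := by gcongr
  have hsmall : ∀ p : ℕ, 2 ≤ p → ∀ a : ℕ, (a : ℝ) + 1 ≤ C₀ * ((p : ℝ) ^ a) ^ ε := by
    intro p hp a
    have hp' : (2 : ℝ) ≤ p := by exact_mod_cast hp
    have h1 : ((2 : ℝ) ^ a) ^ ε ≤ ((p : ℝ) ^ a) ^ ε := by gcongr
    have h2 : (a : ℝ) * (ε * Real.log 2) + 1 ≤ ((2 : ℝ) ^ a) ^ ε := by
      have : ((2 : ℝ) ^ a) ^ ε = Real.exp (a * (ε * Real.log 2)) := by
        rw [← Real.rpow_natCast, ← Real.rpow_mul (by norm_num),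
          Real.rpow_def_of_pos (by norm_num)]
        ring_nf
      rw [this]
      exact Real.add_one_le_exp _
    have h3 : (a : ℝ) + 1 ≤ C₀ * ((a : ℝ) * (ε * Real.log 2) + 1) := by
      have e : C₀ * ((a : ℝ) * (ε * Real.log 2) + 1)
          = (a : ℝ) * (ε * Real.log 2) + 1 + a + 1 / (ε * Real.log 2) := by
        rw [hC₀]; field_simp; ring
      have := one_div_pos.2 hl
      have : 0 ≤ (a : ℝ) * (ε * Real.log 2) := by positivity
      rw [e]; linarith
    exact h3.trans (mul_le_mul_of_nonneg_left (h2.trans h1) (by linarith))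
  refine ⟨C₀ ^ P, by positivity, fun n hn => ?_⟩
  have hprod : (n : ℝ) ^ ε = ∏ p ∈ n.primeFactors, ((p : ℝ) ^ n.factorization p) ^ ε := by
    rw [Real.finsetProd_rpow _ _ (fun _ _ => by positivity)]
    congr 1
    exact_mod_cast (Nat.prod_factorization_pow_eq_self hn).symm
  have hc : ∏ p ∈ n.primeFactors, (if p < P then C₀ else 1) ≤ C₀ ^ P := by
    rw [Finset.prod_ite, Finset.prod_const, Finset.prod_const_one, mul_one]
    refine pow_le_pow_right₀ hC1 ?_
    calc _ ≤ (Finset.range P).card := Finset.card_le_card fun p hp => by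
            simpa using (Finset.mem_filter.1 hp).2
      _ = P := by simp
  rw [Nat.card_divisors hn, hprod]
  push_cast
  calc ∏ p ∈ n.primeFactors, ((n.factorization p : ℝ) + 1)
      ≤ ∏ p ∈ n.primeFactors,
          ((if p < P then C₀ else 1) * ((p : ℝ) ^ n.factorization p) ^ ε) := by
        refine Finset.prod_le_prod (fun _ _ => by positivity) fun p hp => ?_
        split_ifs with h
        · exact hsmall p (Nat.prime_of_mem_primeFactors hp).two_le _
        · rw [one_mul]; exact hlarge p (not_lt.1 h) _
    _ ≤ _ := by
        rw [Finset.prod_mul_distrib]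
        gcongr

/-- The triangle spanned by three lattice points of the hyperbola `xz = K` has area at least
`1/2`. -/
lemma hyperbola_triangle {K x₁ x₂ x₃ z₁ z₂ z₃ : ℤ} (hK : K ≠ 0) (h1 : x₁ * z₁ = K)
    (h2 : x₂ * z₂ = K) (h3 : x₃ * z₃ = K) (h12 : x₁ ≠ x₂) (h23 : x₂ ≠ x₃) (h31 : x₃ ≠ x₁) :
    |x₁ * x₂ * x₃| ≤ |K| * (|x₁ - x₂| * |x₂ - x₃| * |x₃ - x₁|) := by
  set D := x₁ * (z₂ - z₃) + x₂ * (z₃ - z₁) + x₃ * (z₁ - z₂) with hD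
  have e : D * (x₁ * x₂ * x₃) = K * ((x₁ - x₂) * (x₂ - x₃) * (x₃ - x₁)) := by
    rw [hD]
    linear_combination (x₃ - x₂) * x₂ * x₃ * h1 + (x₁ - x₃) * x₁ * x₃ * h2
      + (x₂ - x₁) * x₁ * x₂ * h3
  have hD0 : D ≠ 0 := by
    intro h0
    rw [h0, zero_mul] at e
    exact mul_ne_zero hK (mul_ne_zero (mul_ne_zero (sub_ne_zero.2 h12) (sub_ne_zero.2 h23))
      (sub_ne_zero.2 h31)) e.symm
  have hD1 : 1 ≤ |D| := Int.one_le_abs hD0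
  rw [← abs_mul, ← abs_mul, ← abs_mul, ← e, abs_mul D]
  exact le_mul_of_one_le_left (abs_nonneg _) hD1

/-- At most `O_ε(L^ε)` lattice points of a hyperbola `xz = K`, `K ≠ 0`, lie in a box of side `L`,
wherever the box is: if there are three of them then `|K| ≤ L⁶`, and the divisor bound applies. -/
lemma hyperbola_count (ε : ℝ) (hε : 0 < ε) :
    ∃ C > (0 : ℝ), ∀ (L : ℝ) (K : ℤ) (S : Set (ℤ × ℤ)), 1 ≤ L → K ≠ 0 →
      (∀ p ∈ S, p.1 * p.2 = K) →
      (∀ p ∈ S, ∀ q ∈ S, |((p.1 - q.1 : ℤ) : ℝ)| ≤ L ∧ |((p.2 - q.2 : ℤ) : ℝ)| ≤ L) →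
      CardLE S (C * L ^ ε) := by
  obtain ⟨C, hC, hdiv⟩ := divisor_bound (ε / 6) (by positivity)
  refine ⟨2 + 2 * C, by positivity, fun L K S hL hK hS hd F hF => ?_⟩
  have hLε : 1 ≤ L ^ ε := Real.one_le_rpow hL hε.le
  by_cases hF2 : F.card ≤ 2
  · have : (F.card : ℝ) ≤ 2 := by exact_mod_cast hF2
    nlinarith
  obtain ⟨a, b, c, ha, hb, hc, hab, hac, hbc⟩ := Finset.two_lt_card_iff.1 (not_le.1 hF2)
  have ha := hF a ha
  have hb := hF b hb
  have hc := hF c hc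
  have h1 := hS a ha
  have h2 := hS b hb
  have h3 := hS c hc
  have ne1 : ∀ p ∈ S, ∀ q ∈ S, p ≠ q → p.1 ≠ q.1 := by
    intro p hp q hq hpq h
    refine hpq (Prod.ext h ?_)
    have hp0 : p.1 ≠ 0 := fun h0 => hK (by rw [← hS p hp, h0, zero_mul])
    refine mul_left_cancel₀ hp0 ?_
    rw [hS p hp, h, hS q hq]
  have ne2 : ∀ p ∈ S, ∀ q ∈ S, p ≠ q → p.2 ≠ q.2 := by
    intro p hp q hq hpq h
    refine hpq (Prod.ext ?_ h)
    have hp0 : p.2 ≠ 0 := fun h0 => hK (by rw [← hS p hp, h0, mul_zero])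
    refine mul_right_cancel₀ hp0 ?_
    rw [hS p hp, h, hS q hq]
  have t1 := hyperbola_triangle hK h1 h2 h3 (ne1 a ha b hb hab) (ne1 b hb c hc hbc)
    (ne1 c hc a ha (Ne.symm hac))
  have t2 := hyperbola_triangle hK ((mul_comm _ _).trans h1) ((mul_comm _ _).trans h2)
    ((mul_comm _ _).trans h3) (ne2 a ha b hb hab) (ne2 b hb c hc hbc)
    (ne2 c hc a ha (Ne.symm hac))
  have hKpos : (0 : ℝ) < |(K : ℝ)| := abs_pos.2 (by exact_mod_cast hK)
  have t1' : |((a.1 * b.1 * c.1 : ℤ) : ℝ)| ≤ |(K : ℝ)| * L ^ 3 := by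
    have : |((a.1 * b.1 * c.1 : ℤ) : ℝ)| ≤ |(K : ℝ)| * (|((a.1 - b.1 : ℤ) : ℝ)| *
        |((b.1 - c.1 : ℤ) : ℝ)| * |((c.1 - a.1 : ℤ) : ℝ)|) := by exact_mod_cast t1
    refine this.trans (mul_le_mul_of_nonneg_left ?_ hKpos.le)
    calc _ ≤ L * L * L := by
          gcongr
          exacts [(hd a ha b hb).1, (hd b hb c hc).1, (hd c hc a ha).1]
      _ = L ^ 3 := by ring
  have t2' : |((a.2 * b.2 * c.2 : ℤ) : ℝ)| ≤ |(K : ℝ)| * L ^ 3 := by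
    have : |((a.2 * b.2 * c.2 : ℤ) : ℝ)| ≤ |(K : ℝ)| * (|((a.2 - b.2 : ℤ) : ℝ)| *
        |((b.2 - c.2 : ℤ) : ℝ)| * |((c.2 - a.2 : ℤ) : ℝ)|) := by exact_mod_cast t2
    refine this.trans (mul_le_mul_of_nonneg_left ?_ hKpos.le)
    calc _ ≤ L * L * L := by
          gcongr
          exacts [(hd a ha b hb).2, (hd b hb c hc).2, (hd c hc a ha).2]
      _ = L ^ 3 := by ring
  have hKL : |(K : ℝ)| ≤ L ^ 6 := by
    have e : ((a.1 * b.1 * c.1 : ℤ) : ℝ) * ((a.2 * b.2 * c.2 : ℤ) : ℝ) = (K : ℝ) ^ 3 := by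
      have : (a.1 * b.1 * c.1) * (a.2 * b.2 * c.2) = K ^ 3 := by
        calc (a.1 * b.1 * c.1) * (a.2 * b.2 * c.2)
            = (a.1 * a.2) * (b.1 * b.2) * (c.1 * c.2) := by ring
          _ = K ^ 3 := by rw [h1, h2, h3]; ring
      exact_mod_cast this
    have h := mul_le_mul t1' t2' (abs_nonneg _) (by positivity)
    rw [← abs_mul, e, abs_pow] at h
    have h' : |(K : ℝ)| ^ 2 * |(K : ℝ)| ≤ |(K : ℝ)| ^ 2 * L ^ 6 := by nlinarith
    exact le_of_mul_le_mul_left h' (by positivity)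
  have hn : K.natAbs ≠ 0 := Int.natAbs_ne_zero.2 hK
  have hcount : CardLE S (K.natAbs.divisors.card * 2) := by
    refine CardLE.fiber (T := (K.natAbs.divisors : Set ℕ)) (fun p => p.1.natAbs)
      (fun G hG => by exact_mod_cast Finset.card_le_card hG) (fun p hp => ?_) (by norm_num) ?_
    · simp only [Finset.mem_coe, Nat.mem_divisors]
      exact ⟨Int.natAbs_dvd_natAbs.2 ⟨_, (hS p hp).symm⟩, hn⟩
    · intro y _ G hG
      have hi : Set.InjOn Prod.fst (G : Set (ℤ × ℤ)) := by
        intro p hp q hq h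
        by_contra hpq
        exact ne1 p (hG p hp).1 q (hG q hq).1 hpq h
      have h : G.card ≤ ({(y : ℤ), -(y : ℤ)} : Finset ℤ).card :=
        Finset.card_le_card_of_injOn Prod.fst (fun p hp => by
          have := (hG p hp).2
          have := Int.natAbs_eq_iff.1 this
          simpa using this) hi
      exact_mod_cast h.trans Finset.card_le_two
  have hKr : ((K.natAbs : ℕ) : ℝ) = |(K : ℝ)| := by
    rw [Nat.cast_natAbs]; push_cast; rfl
  have hd' : (K.natAbs.divisors.card : ℝ) ≤ C * L ^ ε := by
    refine (hdiv _ hn).trans (mul_le_mul_of_nonneg_left ?_ hC.le)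
    rw [hKr]
    calc |(K : ℝ)| ^ (ε / 6) ≤ (L ^ 6) ^ (ε / 6) := by gcongr
      _ = L ^ ε := by
        rw [← Real.rpow_natCast, ← Real.rpow_mul (by linarith)]
        congr 1; push_cast; ring
  have := hcount F hF
  nlinarith

/-- The integer interval of centre `c` and half-length `2R`. -/
def itv (c : ℤ) (R : ℝ) : Set ℤ := {t | |((t - c : ℤ) : ℝ)| ≤ 2 * R}

lemma itv_card (c : ℤ) {R : ℝ} (hR : 1 ≤ R) : CardLE (itv c R) (5 * R) := by
  intro F hF
  have hsub : F ⊆ Finset.Icc (c - ⌊2 * R⌋) (c + ⌊2 * R⌋) := by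
    intro t ht
    have h : |((t - c : ℤ) : ℝ)| ≤ 2 * R := hF t ht
    rw [abs_le] at h
    have h1 : t - c ≤ ⌊2 * R⌋ := Int.le_floor.2 h.2
    have h2 : c - t ≤ ⌊2 * R⌋ := Int.le_floor.2 (by push_cast at h ⊢; linarith)
    rw [Finset.mem_Icc]
    constructor <;> linarith
  have hc := Finset.card_le_card hsub
  rw [Int.card_Icc] at hc
  have h0 : 0 ≤ ⌊2 * R⌋ := Int.floor_nonneg.2 (by linarith)
  have hc' : (F.card : ℤ) ≤ 2 * ⌊2 * R⌋ + 1 := by omega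
  have hcr : (F.card : ℝ) ≤ 2 * (⌊2 * R⌋ : ℝ) + 1 := by exact_mod_cast hc'
  have := Int.floor_le (2 * R)
  linarith

lemma itv_sub {c s t : ℤ} {R : ℝ} (hs : s ∈ itv c R) (ht : t ∈ itv c R) :
    |(s : ℝ) - t| ≤ 4 * R := by
  have hs : |((s - c : ℤ) : ℝ)| ≤ 2 * R := hs
  have ht : |((t - c : ℤ) : ℝ)| ≤ 2 * R := ht
  push_cast at hs ht
  rw [abs_le] at *
  constructor <;> linarith

/-- The one-dimensional form of the count: `(s - α)(t - σs - β) = K ≠ 0` has `O_ε(M^ε)` solutions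
with `s`, `t` in intervals of length `O(M)`. -/
lemma hyperbola_count_itv (ε : ℝ) (hε : 0 < ε) :
    ∃ C > (0 : ℝ), ∀ (c d α β σ K : ℤ) (R R' M : ℝ), |σ| ≤ 1 → 1 ≤ M → R ≤ M → R' ≤ M → K ≠ 0 →
      CardLE {q : ℤ × ℤ | q.1 ∈ itv c R ∧ q.2 ∈ itv d R' ∧
        (q.1 - α) * (q.2 - σ * q.1 - β) = K} (C * M ^ ε) := by
  obtain ⟨C, hC, h⟩ := hyperbola_count ε hε
  refine ⟨C * 8 ^ ε, by positivity, fun c d α β σ K R R' M hσ hM hR hR' hK => ?_⟩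
  set S := {q : ℤ × ℤ | q.1 ∈ itv c R ∧ q.2 ∈ itv d R' ∧ (q.1 - α) * (q.2 - σ * q.1 - β) = K}
  have hσ' : |(σ : ℝ)| ≤ 1 := by exact_mod_cast hσ
  have key := h (8 * M) K (Set.image (fun q : ℤ × ℤ => (q.1 - α, q.2 - σ * q.1 - β)) S) (by linarith) hK
    (by rintro _ ⟨q, hq, rfl⟩; exact hq.2.2) (by
      rintro _ ⟨q, hq, rfl⟩ _ ⟨q', hq', rfl⟩
      have e1 := itv_sub hq.1 hq'.1
      have e2 := itv_sub hq.2.1 hq'.2.1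
      constructor
      · push_cast
        rw [show (q.1 : ℝ) - α - (q'.1 - α) = q.1 - q'.1 by ring]
        linarith
      · push_cast
        rw [show (q.2 : ℝ) - σ * q.1 - β - (q'.2 - σ * q'.1 - β)
          = (q.2 - q'.2) - σ * (q.1 - q'.1) by ring]
        have e3 : |(σ : ℝ) * (q.1 - q'.1)| ≤ 4 * R := by
          rw [abs_mul]
          exact (mul_le_of_le_one_left (abs_nonneg _) hσ').trans e1
        have := abs_sub ((q.2 : ℝ) - q'.2) (σ * (q.1 - q'.1))
        linarith)
  rw [Real.mul_rpow (by norm_num) (by linarith), ← mul_assoc] at key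
  refine key.of_inj _ (fun x hx => ⟨x, hx, rfl⟩) fun x _ y _ hxy => ?_
  simp only [Prod.mk.injEq] at hxy
  have h1 : x.1 = y.1 := by linarith [hxy.1]
  have h2 := hxy.2
  rw [h1] at h2
  exact Prod.ext h1 (by linarith)

/-! ### Lattice points with a prescribed inner product -/

/-- Number of pairs of lattice points `s`, `t` in boxes of sides `R`, `R'` for which the vectors
`x = s - α ≠ 0` and `z = t - σs - β ≠ 0` have a prescribed inner product `k`.
If one of the products `x₁z₁`, `x₂z₂` is nonzero, one fixes the coordinates entering the other one
and counts on a hyperbola; if both vanish then, `x` and `z` being nonzero, either `x₁ = z₂ = 0` or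
`z₁ = x₂ = 0`. -/
lemma pair_count (ε : ℝ) (hε : 0 < ε) :
    ∃ C > (0 : ℝ), ∀ (a b α β : ℤ × ℤ) (σ k : ℤ) (R R' M : ℝ), |σ| ≤ 1 → 1 ≤ R → 1 ≤ R' →
      R ≤ M → R' ≤ M →
      CardLE {p : (ℤ × ℤ) × (ℤ × ℤ) | (p.1.1 ∈ itv a.1 R ∧ p.1.2 ∈ itv a.2 R) ∧
        (p.2.1 ∈ itv b.1 R' ∧ p.2.2 ∈ itv b.2 R') ∧
        ¬ (p.1.1 - α.1 = 0 ∧ p.1.2 - α.2 = 0) ∧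
        ¬ (p.2.1 - σ * p.1.1 - β.1 = 0 ∧ p.2.2 - σ * p.1.2 - β.2 = 0) ∧
        (p.1.1 - α.1) * (p.2.1 - σ * p.1.1 - β.1)
          + (p.1.2 - α.2) * (p.2.2 - σ * p.1.2 - β.2) = k} (C * M ^ ε * (R * R')) := by
  obtain ⟨C, hC, h⟩ := hyperbola_count_itv ε hε
  refine ⟨50 * C + 50, by positivity, fun a b α β σ k R R' M hσ hR hR' hRM hRM' => ?_⟩
  have hM : 1 ≤ M := hR.trans hRM
  set S := {p : (ℤ × ℤ) × (ℤ × ℤ) | (p.1.1 ∈ itv a.1 R ∧ p.1.2 ∈ itv a.2 R) ∧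
        (p.2.1 ∈ itv b.1 R' ∧ p.2.2 ∈ itv b.2 R') ∧
        ¬ (p.1.1 - α.1 = 0 ∧ p.1.2 - α.2 = 0) ∧
        ¬ (p.2.1 - σ * p.1.1 - β.1 = 0 ∧ p.2.2 - σ * p.1.2 - β.2 = 0) ∧
        (p.1.1 - α.1) * (p.2.1 - σ * p.1.1 - β.1)
          + (p.1.2 - α.2) * (p.2.2 - σ * p.1.2 - β.2) = k}
  have box : ∀ c d : ℤ, CardLE (itv c R ×ˢ itv d R') (25 * (R * R')) := fun c d =>
    ((itv_card c hR).prod (itv_card d hR')).mono (fun _ hx => hx) (le_of_eq (by ring))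
  have hD : 0 ≤ C * M ^ ε := by positivity
  have c1 : CardLE {p | p ∈ S ∧ (p.1.2 - α.2) * (p.2.2 - σ * p.1.2 - β.2) ≠ 0}
      (25 * (R * R') * (C * M ^ ε)) := by
    refine CardLE.fiber (fun p => (p.1.1, p.2.1)) (box a.1 b.1)
      (fun p hp => ⟨hp.1.1.1, hp.1.2.1.1⟩) hD fun y _ => ?_
    by_cases hK : k - (y.1 - α.1) * (y.2 - σ * y.1 - β.1) = 0
    · intro F hF
      have : F = ∅ := by
        refine Finset.eq_empty_of_forall_notMem fun p hp => ?_
        obtain ⟨⟨hS, hne⟩, rfl⟩ := hF p hp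
        exact hne (by linear_combination hS.2.2.2.2 + hK)
      simpa [this] using hD
    · refine (h a.2 b.2 α.2 β.2 σ _ R R' M hσ hM hRM hRM' hK).of_inj (fun p => (p.1.2, p.2.2))
        ?_ ?_
      · rintro p ⟨⟨hS, -⟩, rfl⟩
        exact ⟨hS.1.2, hS.2.1.2, by linear_combination hS.2.2.2.2⟩
      · rintro p ⟨-, hp⟩ q ⟨-, hq⟩ hpq
        have e := hp.trans hq.symm
        simp only [Prod.mk.injEq] at e hpq
        exact Prod.ext (Prod.ext e.1 hpq.1) (Prod.ext e.2 hpq.2)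
  have c2 : CardLE {p | p ∈ S ∧ (p.1.1 - α.1) * (p.2.1 - σ * p.1.1 - β.1) ≠ 0}
      (25 * (R * R') * (C * M ^ ε)) := by
    refine CardLE.fiber (fun p => (p.1.2, p.2.2)) (box a.2 b.2)
      (fun p hp => ⟨hp.1.1.2, hp.1.2.1.2⟩) hD fun y _ => ?_
    by_cases hK : k - (y.1 - α.2) * (y.2 - σ * y.1 - β.2) = 0
    · intro F hF
      have : F = ∅ := by
        refine Finset.eq_empty_of_forall_notMem fun p hp => ?_
        obtain ⟨⟨hS, hne⟩, rfl⟩ := hF p hp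
        exact hne (by linear_combination hS.2.2.2.2 + hK)
      simpa [this] using hD
    · refine (h a.1 b.1 α.1 β.1 σ _ R R' M hσ hM hRM hRM' hK).of_inj (fun p => (p.1.1, p.2.1))
        ?_ ?_
      · rintro p ⟨⟨hS, -⟩, rfl⟩
        exact ⟨hS.1.1, hS.2.1.1, by linear_combination hS.2.2.2.2⟩
      · rintro p ⟨-, hp⟩ q ⟨-, hq⟩ hpq
        have e := hp.trans hq.symm
        simp only [Prod.mk.injEq] at e hpq
        exact Prod.ext (Prod.ext hpq.1 e.1) (Prod.ext hpq.2 e.2)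
  have c3 : CardLE {p | p ∈ S ∧ p.1.1 - α.1 = 0 ∧ p.2.2 - σ * p.1.2 - β.2 = 0}
      (25 * (R * R')) := by
    refine (box a.2 b.1).of_inj (fun p => (p.1.2, p.2.1)) (fun p hp => ⟨hp.1.1.2, hp.1.2.1.1⟩) ?_
    rintro p ⟨-, hp⟩ q ⟨-, hq⟩ hpq
    simp only [Prod.mk.injEq] at hpq
    have e : p.2.2 - σ * p.1.2 = q.2.2 - σ * q.1.2 := by linarith [hp.2, hq.2]
    rw [hpq.1] at e
    exact Prod.ext (Prod.ext (by linarith [hp.1, hq.1]) hpq.1) (Prod.ext hpq.2 (by linarith))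
  have c4 : CardLE {p | p ∈ S ∧ p.1.2 - α.2 = 0 ∧ p.2.1 - σ * p.1.1 - β.1 = 0}
      (25 * (R * R')) := by
    refine (box a.1 b.2).of_inj (fun p => (p.1.1, p.2.2)) (fun p hp => ⟨hp.1.1.1, hp.1.2.1.2⟩) ?_
    rintro p ⟨-, hp⟩ q ⟨-, hq⟩ hpq
    simp only [Prod.mk.injEq] at hpq
    have e : p.2.1 - σ * p.1.1 = q.2.1 - σ * q.1.1 := by linarith [hp.2, hq.2]
    rw [hpq.1] at e
    exact Prod.ext (Prod.ext hpq.1 (by linarith [hp.1, hq.1])) (Prod.ext (by linarith) hpq.2)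
  have c12 := CardLE.union (S := {p | p ∈ S ∧
    ((p.1.2 - α.2) * (p.2.2 - σ * p.1.2 - β.2) ≠ 0 ∨
      (p.1.1 - α.1) * (p.2.1 - σ * p.1.1 - β.1) ≠ 0)}) c1 c2
    (fun p hp => hp.2.imp (fun h => ⟨hp.1, h⟩) fun h => ⟨hp.1, h⟩)
  have c34 := CardLE.union (S := {p | p ∈ S ∧
    ((p.1.1 - α.1 = 0 ∧ p.2.2 - σ * p.1.2 - β.2 = 0) ∨
      (p.1.2 - α.2 = 0 ∧ p.2.1 - σ * p.1.1 - β.1 = 0))}) c3 c4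
    (fun p hp => hp.2.imp (fun h => ⟨hp.1, h⟩) fun h => ⟨hp.1, h⟩)
  refine (CardLE.union (S := S) c12 c34 fun p hp => ?_).mono (fun _ hx => hx) ?_
  · have h1 := hp.2.2.1
    have h2 := hp.2.2.2.1
    by_cases e2 : (p.1.2 - α.2) * (p.2.2 - σ * p.1.2 - β.2) = 0
    · by_cases e1 : (p.1.1 - α.1) * (p.2.1 - σ * p.1.1 - β.1) = 0
      · refine Or.inr ⟨hp, ?_⟩
        rw [mul_eq_zero] at e1 e2
        tauto
      · exact Or.inl ⟨hp, Or.inr e1⟩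
    · exact Or.inl ⟨hp, Or.inl e2⟩
  · have hMε : 1 ≤ M ^ ε := Real.one_le_rpow hM hε.le
    have hRR : 0 ≤ R * R' := by positivity
    nlinarith

/-- A circle, written as `(x - α)·(x - β) = k`, meets a box of side `R` in `O(R)` lattice points:
each abscissa carries at most two of them. -/
lemma circle_count (a α β : ℤ × ℤ) (k : ℤ) {R : ℝ} (hR : 1 ≤ R) :
    CardLE {x : ℤ × ℤ | (x.1 ∈ itv a.1 R ∧ x.2 ∈ itv a.2 R) ∧
      (x.1 - α.1) * (x.1 - β.1) + (x.2 - α.2) * (x.2 - β.2) = k} (10 * R) := by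
  refine (CardLE.fiber (B := 2) Prod.fst (itv_card a.1 hR) (fun x hx => hx.1.1) (by norm_num)
    fun y _ F hF => ?_).mono (fun _ hx => hx) (by linarith)
  by_contra hlt
  have hlt' : 2 < F.card := by
    rw [not_le] at hlt
    exact_mod_cast hlt
  obtain ⟨p, q, r, hp, hq, hr, hpq, hpr, hqr⟩ := Finset.two_lt_card_iff.1 hlt'
  have hp := hF p hp
  have hq := hF q hq
  have hr := hF r hr
  have ne : ∀ u v : ℤ × ℤ, u.1 = y → v.1 = y → u ≠ v → u.2 - v.2 ≠ 0 := fun u v hu hv huv h =>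
    huv (Prod.ext (hu.trans hv.symm) (by linarith))
  have e1 := hp.1.2
  have e2 := hq.1.2
  have e3 := hr.1.2
  rw [hp.2] at e1
  rw [hq.2] at e2
  rw [hr.2] at e3
  have f1 : p.2 + q.2 - α.2 - β.2 = 0 :=
    mul_left_cancel₀ (ne p q hp.2 hq.2 hpq) (by linear_combination e1 - e2)
  have f2 : p.2 + r.2 - α.2 - β.2 = 0 :=
    mul_left_cancel₀ (ne p r hp.2 hr.2 hpr) (by linear_combination e1 - e3)
  exact ne q r hq.2 hr.2 hqr (by linarith)

/-- A line meets a box of side `R` in `O(R)` lattice points. -/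
lemma line_count (a u β : ℤ × ℤ) (k : ℤ) {R : ℝ} (hR : 1 ≤ R) :
    CardLE {x : ℤ × ℤ | (x.1 ∈ itv a.1 R ∧ x.2 ∈ itv a.2 R) ∧ ¬ (u.1 = 0 ∧ u.2 = 0) ∧
      u.1 * (x.1 - β.1) + u.2 * (x.2 - β.2) = k} (5 * R) := by
  by_cases hu : u.2 = 0
  · refine (itv_card a.2 hR).of_inj Prod.snd (fun x hx => hx.1.2) ?_
    rintro x ⟨-, hu', hx⟩ y ⟨-, -, hy⟩ hxy
    have hu1 : u.1 ≠ 0 := fun h => hu' ⟨h, hu⟩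
    refine Prod.ext (mul_left_cancel₀ hu1 ?_) hxy
    rw [hu] at hx hy
    linear_combination hx - hy
  · refine (itv_card a.1 hR).of_inj Prod.fst (fun x hx => hx.1.1) ?_
    rintro x ⟨-, -, hx⟩ y ⟨-, -, hy⟩ hxy
    refine Prod.ext hxy (mul_left_cancel₀ hu ?_)
    rw [hxy] at hx
    linear_combination hx - hy

/-! ### The support of the tensor, and the conclusion -/

lemma mem_itv_of_jbZ {n a : ℤ × ℤ} {N : ℝ} (h : jbZ (n - a) ≤ 2 * N) :
    n.1 ∈ itv a.1 N ∧ n.2 ∈ itv a.2 N := by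
  have key : ∀ x : ℝ, x ^ 2 ≤ jbSq (n - a) → |x| ≤ 2 * N := fun x hx =>
    (Real.abs_le_sqrt hx).trans h
  constructor
  · refine key _ ?_
    simp only [jbSq, Prod.fst_sub]
    nlinarith [sq_nonneg (((n - a).2 : ℤ) : ℝ)]
  · refine key _ ?_
    simp only [jbSq, Prod.snd_sub]
    nlinarith [sq_nonneg (((n - a).1 : ℤ) : ℝ)]

/-- On the support of `h^m`, `κ = 2 (n₂ - n₁)·(n₂ - n₃)`; the half `m / 2` is thus exact. -/
lemma hTensorK_support {a₁ a₂ a₃ : ℤ × ℤ} {N₁ N₂ N₃ : ℝ} {m : ℤ} {n n₁ n₂ n₃ : ℤ × ℤ}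
    (h : hTensorK a₁ a₂ a₃ N₁ N₂ N₃ m n n₁ n₂ n₃ ≠ 0) :
    (n.1 = n₁.1 - n₂.1 + n₃.1 ∧ n.2 = n₁.2 - n₂.2 + n₃.2) ∧
    ¬ (n₂.1 - n₁.1 = 0 ∧ n₂.2 - n₁.2 = 0) ∧ ¬ (n₂.1 - n₃.1 = 0 ∧ n₂.2 - n₃.2 = 0) ∧
    (n₂.1 - n₁.1) * (n₂.1 - n₃.1) + (n₂.2 - n₁.2) * (n₂.2 - n₃.2) = m / 2 ∧
    (n₁.1 ∈ itv a₁.1 N₁ ∧ n₁.2 ∈ itv a₁.2 N₁) ∧ (n₂.1 ∈ itv a₂.1 N₂ ∧ n₂.2 ∈ itv a₂.2 N₂) ∧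
    (n₃.1 ∈ itv a₃.1 N₃ ∧ n₃.2 ∈ itv a₃.2 N₃) := by
  unfold hTensorK hTensor at h
  split_ifs at h with hk hh
  · obtain ⟨hn, h21, h23, -, b1, -, b2, -, b3⟩ := hh
    have hn1 : n.1 = n₁.1 - n₂.1 + n₃.1 := by rw [hn]; rfl
    have hn2 : n.2 = n₁.2 - n₂.2 + n₃.2 := by rw [hn]; rfl
    refine ⟨⟨hn1, hn2⟩, fun e => h21 (Prod.ext (by linarith [e.1]) (by linarith [e.2])),
      fun e => h23 (Prod.ext (by linarith [e.1]) (by linarith [e.2])), ?_,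
      mem_itv_of_jbZ b1, mem_itv_of_jbZ b2, mem_itv_of_jbZ b3⟩
    have : m = 2 * ((n₂.1 - n₁.1) * (n₂.1 - n₃.1) + (n₂.2 - n₁.2) * (n₂.2 - n₃.2)) := by
      rw [← hk]
      unfold kappa jbSqInt
      rw [hn1, hn2]
      ring
    omega
  · exact absurd rfl h
  · exact absurd rfl h

lemma hTensorK_norm_le (a₁ a₂ a₃ : ℤ × ℤ) (N₁ N₂ N₃ : ℝ) (m : ℤ) (n n₁ n₂ n₃ : ℤ × ℤ) :
    ‖hTensorK a₁ a₂ a₃ N₁ N₂ N₃ m n n₁ n₂ n₃‖ ≤ 1 := by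
  unfold hTensorK hTensor
  split_ifs <;> simp

/-- The product of any two of the sizes is at most `N_max N_med`. -/
lemma mul_le_max_mul_med (x y z : ℝ) (hx : 1 ≤ x) (hy : 1 ≤ y) (hz : 1 ≤ z) :
    x * y ≤ max x (max y z) * (x + y + z - max x (max y z) - min x (min y z)) ∧
    x * z ≤ max x (max y z) * (x + y + z - max x (max y z) - min x (min y z)) ∧
    y * z ≤ max x (max y z) * (x + y + z - max x (max y z) - min x (min y z)) := by
  rcases le_total x y with h1 | h1 <;> rcases le_total y z with h2 | h2 <;>
    rcases le_total x z with h3 | h3 <;>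
    simp only [max_eq_left, max_eq_right, min_eq_left, min_eq_right, h1, h2, h3] <;>
    refine ⟨?_, ?_, ?_⟩ <;> nlinarith

/-- The Schur test in the form in which the operator norms of the statement use it. -/
lemma opNorm_bound {ι μ : Type*} (H : ι → μ → ℂ) (hH : ∀ q m, ‖H q m‖ ≤ 1) {A B X : ℝ}
    (hA : ∀ q, CardLE {m | H q m ≠ 0} A) (hB : ∀ m, CardLE {q | H q m ≠ 0} B)
    (hA0 : 0 ≤ A) (hX : 0 ≤ X) (hABX : A * B ≤ X ^ 2) :
    (⨆ (f : ι → ℂ) (_ : (∑' q, ‖f q‖ ^ 2) = 1),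
      ∑' m, ENNReal.ofReal (‖∑' q, H q m * f q‖ ^ 2)) ^ ((1 : ℝ) / 2) ≤ ENNReal.ofReal X := by
  have h : (⨆ (f : ι → ℂ) (_ : (∑' q, ‖f q‖ ^ 2) = 1),
      ∑' m, ENNReal.ofReal (‖∑' q, H q m * f q‖ ^ 2)) ≤ ENNReal.ofReal (X ^ 2) :=
    iSup₂_le fun f hf => (schur_test H hH hA hB hA0 f hf).trans (ENNReal.ofReal_le_ofReal hABX)
  refine (ENNReal.rpow_le_rpow h (by norm_num)).trans (le_of_eq ?_)
  rw [ENNReal.ofReal_rpow_of_nonneg (by positivity) (by norm_num), ← Real.sqrt_eq_rpow,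
    Real.sqrt_sq hX]

/-- Lemma 4.2 (ii): at each fixed value `m` of the phase `κ`,
`‖h^m‖₁ ≲_θ N_max^{1/2+θ} N_med^{1/2}`, uniformly in the centers, the sizes, and `m`. -/
theorem tensor_bound_I_ii (θ : ℝ) (hθ : 0 < θ) :
    ∃ C > (0 : ℝ), ∀ (a₁ a₂ a₃ : ℤ × ℤ) (N₁ N₂ N₃ : ℝ),
      1 ≤ N₁ → 1 ≤ N₂ → 1 ≤ N₃ → ∀ m : ℤ,
      tNorm1 (hTensorK a₁ a₂ a₃ N₁ N₂ N₃ m)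
        ≤ ENNReal.ofReal
            (C * max N₁ (max N₂ N₃) ^ ((1 : ℝ) / 2 + θ) *
              (N₁ + N₂ + N₃ - max N₁ (max N₂ N₃) - min N₁ (min N₂ N₃)) ^ ((1 : ℝ) / 2)) := by
  obtain ⟨C, hC, hcount⟩ := pair_count (2 * θ) (by positivity)
  refine ⟨C + 100, by positivity, fun a₁ a₂ a₃ N₁ N₂ N₃ h1 h2 h3 m => ?_⟩
  obtain ⟨p12, p13, p23⟩ := mul_le_max_mul_med N₁ N₂ N₃ h1 h2 h3
  set M := max N₁ (max N₂ N₃) with hM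
  set d := N₁ + N₂ + N₃ - M - min N₁ (min N₂ N₃) with hd
  have l1 : N₁ ≤ M := le_max_left _ _
  have l2 : N₂ ≤ M := (le_max_left _ _).trans (le_max_right _ _)
  have l3 : N₃ ≤ M := (le_max_right _ _).trans (le_max_right _ _)
  have hM1 : 1 ≤ M := h1.trans l1
  have hM0 : 0 < M := by linarith
  have hd0 : 0 ≤ d := by
    have : 0 ≤ M * d := le_trans (by positivity) p12
    exact nonneg_of_mul_nonneg_right this hM0
  set X := (C + 100) * M ^ ((1 : ℝ) / 2 + θ) * d ^ ((1 : ℝ) / 2) with hX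
  have hX0 : 0 ≤ X := by positivity
  have hXsq : X ^ 2 = (C + 100) ^ 2 * (M ^ (2 * θ) * (M * d)) := by
    have e1 : (M ^ ((1 : ℝ) / 2 + θ)) ^ 2 = M ^ (2 * θ) * M := by
      rw [← Real.rpow_natCast, ← Real.rpow_mul hM0.le, ← Real.rpow_add_one hM0.ne']
      congr 1; push_cast; ring
    have e2 : (d ^ ((1 : ℝ) / 2)) ^ 2 = d := by
      rw [← Real.sqrt_eq_rpow, Real.sq_sqrt hd0]
    rw [hX, mul_pow, mul_pow, e1, e2]
    ring
  have hMθ : 1 ≤ M ^ (2 * θ) := Real.one_le_rpow hM1 (by positivity)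
  -- The bounds produced by the counts below all have one of the following two shapes.
  have big : ∀ P : ℝ, 0 ≤ P → P ≤ M * d → C * M ^ (2 * θ) * P * 1 ≤ X ^ 2 := by
    intro P hP hPM
    rw [hXsq, mul_one, mul_assoc]
    gcongr
    nlinarith
  have small : ∀ P : ℝ, 0 ≤ P → P ≤ M * d → 100 * P ≤ X ^ 2 := by
    intro P hP hPM
    rw [hXsq]
    gcongr
    · nlinarith
    · nlinarith
  have hsupp := fun n n₁ n₂ n₃ => hTensorK_support (a₁ := a₁) (a₂ := a₂) (a₃ := a₃) (N₁ := N₁)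
    (N₂ := N₂) (N₃ := N₃) (m := m) (n := n) (n₁ := n₁) (n₂ := n₂) (n₃ := n₃)
  have hle := hTensorK_norm_le a₁ a₂ a₃ N₁ N₂ N₃ m
  set h := hTensorK a₁ a₂ a₃ N₁ N₂ N₃ m with hh
  have one : ∀ S : Set (ℤ × ℤ), (∀ x ∈ S, ∀ y ∈ S, x = y) → CardLE S 1 := by
    intro S hS F hF
    exact_mod_cast Finset.card_le_one.2 fun x hx y hy => hS x (hF x hx) y (hF y hy)
  refine max_le (max_le ?_ ?_) (max_le ?_ ?_)
  -- For fixed `n`: `(n₁ - n)·(n₃ - n) = m / 2`.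
  · refine opNorm_bound
      (fun (n : ℤ × ℤ) (w : (ℤ × ℤ) × (ℤ × ℤ) × (ℤ × ℤ)) => h n w.1 w.2.1 w.2.2)
      (fun _ _ => hle _ _ _ _) (A := C * M ^ (2 * θ) * (N₁ * N₃)) (B := 1) ?_ ?_
      (by positivity) hX0 (big _ (by positivity) p13)
    · intro n
      refine (hcount a₁ a₃ n n 0 (m / 2) N₁ N₃ M (by simp) h1 h3 l1 l3).of_inj
        (fun w => (w.1, w.2.2)) ?_ ?_
      · intro w hw
        obtain ⟨⟨e1, e2⟩, ne1, ne2, k, b1, b2, b3⟩ := hsupp _ _ _ _ hw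
        refine ⟨b1, b3, fun e => ne2 ⟨?_, ?_⟩, fun e => ne1 ⟨?_, ?_⟩, ?_⟩
        · linarith [e.1]
        · linarith [e.2]
        · linarith [e.1]
        · linarith [e.2]
        · rw [← k]
          simp only [e1, e2]
          ring
      · intro w hw v hv hwv
        obtain ⟨⟨e1, e2⟩, -⟩ := hsupp _ _ _ _ hw
        obtain ⟨⟨f1, f2⟩, -⟩ := hsupp _ _ _ _ hv
        simp only [Prod.mk.injEq] at hwv
        obtain ⟨g1, g3⟩ := hwv
        rw [g1, g3] at e1 e2
        exact Prod.ext g1 (Prod.ext (Prod.ext (by linarith) (by linarith)) g3)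
    · intro w
      refine one _ fun n hn n' hn' => ?_
      obtain ⟨⟨e1, e2⟩, -⟩ := hsupp _ _ _ _ hn
      obtain ⟨⟨f1, f2⟩, -⟩ := hsupp _ _ _ _ hn'
      exact Prod.ext (by linarith) (by linarith)
  -- For fixed `n₁`: `(n₂ - n₁)·(n₃ - n₂) = -(m / 2)`.
  · refine opNorm_bound
      (fun (n₁ : ℤ × ℤ) (w : (ℤ × ℤ) × (ℤ × ℤ) × (ℤ × ℤ)) => h w.1 n₁ w.2.1 w.2.2)
      (fun _ _ => hle _ _ _ _) (A := C * M ^ (2 * θ) * (N₂ * N₃)) (B := 1) ?_ ?_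
      (by positivity) hX0 (big _ (by positivity) p23)
    · intro n₁
      refine (hcount a₂ a₃ n₁ 0 1 (-(m / 2)) N₂ N₃ M (by simp) h2 h3 l2 l3).of_inj
        (fun w => (w.2.1, w.2.2)) ?_ ?_
      · intro w hw
        obtain ⟨⟨e1, e2⟩, ne1, ne2, k, b1, b2, b3⟩ := hsupp _ _ _ _ hw
        refine ⟨b2, b3, ne1, fun e => ne2 ⟨?_, ?_⟩, ?_⟩
        · have := e.1
          simp only [Prod.fst_zero] at this
          linarith
        · have := e.2
          simp only [Prod.snd_zero] at this
          linarith
        · simp only [Prod.fst_zero, Prod.snd_zero]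
          linear_combination -k
      · intro w hw v hv hwv
        obtain ⟨⟨e1, e2⟩, -⟩ := hsupp _ _ _ _ hw
        obtain ⟨⟨f1, f2⟩, -⟩ := hsupp _ _ _ _ hv
        simp only [Prod.mk.injEq] at hwv
        obtain ⟨g2, g3⟩ := hwv
        rw [g2, g3] at e1 e2
        exact Prod.ext (Prod.ext (by linarith) (by linarith)) (Prod.ext g2 g3)
    · intro w
      refine one _ fun n hn n' hn' => ?_
      obtain ⟨⟨e1, e2⟩, -⟩ := hsupp _ _ _ _ hn
      obtain ⟨⟨f1, f2⟩, -⟩ := hsupp _ _ _ _ hn'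
      exact Prod.ext (by linarith) (by linarith)
  -- For fixed `(n, n₂)` the point `n₁` lies on a circle, for fixed `(n₁, n₃)` the point `n₂` does.
  · refine opNorm_bound
      (fun (q : (ℤ × ℤ) × (ℤ × ℤ)) (w : (ℤ × ℤ) × (ℤ × ℤ)) => h q.1 w.1 q.2 w.2)
      (fun _ _ => hle _ _ _ _) (A := 10 * N₁) (B := 10 * N₂) ?_ ?_
      (by positivity) hX0 (le_trans (le_of_eq (by ring)) (small (N₁ * N₂) (by positivity) p12))
    · intro q
      refine (circle_count a₁ q.2 q.1 (-(m / 2)) h1).of_inj Prod.fst ?_ ?_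
      · intro w hw
        obtain ⟨⟨e1, e2⟩, ne1, ne2, k, b1, b2, b3⟩ := hsupp _ _ _ _ hw
        refine ⟨b1, ?_⟩
        rw [e1, e2]
        linear_combination -k
      · intro w hw v hv hwv
        obtain ⟨⟨e1, e2⟩, -⟩ := hsupp _ _ _ _ hw
        obtain ⟨⟨f1, f2⟩, -⟩ := hsupp _ _ _ _ hv
        rw [hwv] at e1 e2
        exact Prod.ext hwv (Prod.ext (by linarith) (by linarith))
    · intro w
      refine (circle_count a₂ w.1 w.2 (m / 2) h2).of_inj Prod.snd ?_ ?_
      · intro q hq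
        obtain ⟨⟨e1, e2⟩, ne1, ne2, k, b1, b2, b3⟩ := hsupp _ _ _ _ hq
        exact ⟨b2, k⟩
      · intro q hq v hv hqv
        obtain ⟨⟨e1, e2⟩, -⟩ := hsupp _ _ _ _ hq
        obtain ⟨⟨f1, f2⟩, -⟩ := hsupp _ _ _ _ hv
        rw [hqv] at e1 e2
        exact Prod.ext (Prod.ext (by linarith) (by linarith)) hqv
  -- Fixing `(n, n₃)` or `(n₁, n₂)` fixes `u = n₁ - n₂ = n - n₃ ≠ 0`; `n₁`, respectively `n₃`, then
  -- lies on a line orthogonal to `u`.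
  · refine opNorm_bound
      (fun (q : (ℤ × ℤ) × (ℤ × ℤ)) (w : (ℤ × ℤ) × (ℤ × ℤ)) => h q.1 w.1 w.2 q.2)
      (fun _ _ => hle _ _ _ _) (A := 5 * N₁) (B := 5 * N₃) ?_ ?_
      (by positivity) hX0 (le_trans (by nlinarith) (small (N₁ * N₃) (by positivity) p13))
    · intro q
      refine (line_count a₁ (q.1 - q.2) q.1 (-(m / 2)) h1).of_inj Prod.fst ?_ ?_
      · intro w hw
        obtain ⟨⟨e1, e2⟩, ne1, ne2, k, b1, b2, b3⟩ := hsupp _ _ _ _ hw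
        simp only [Set.mem_ofPred_eq, Prod.fst_sub, Prod.snd_sub]
        refine ⟨b1, fun e => ne1 ⟨?_, ?_⟩, ?_⟩
        · linarith [e.1]
        · linarith [e.2]
        · rw [e1, e2]
          linear_combination -k
      · intro w hw v hv hwv
        obtain ⟨⟨e1, e2⟩, -⟩ := hsupp _ _ _ _ hw
        obtain ⟨⟨f1, f2⟩, -⟩ := hsupp _ _ _ _ hv
        rw [hwv] at e1 e2
        exact Prod.ext hwv (Prod.ext (by linarith) (by linarith))
    · intro w
      refine (line_count a₃ (w.1 - w.2) w.2 (m / 2) h3).of_inj Prod.snd ?_ ?_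
      · intro q hq
        obtain ⟨⟨e1, e2⟩, ne1, ne2, k, b1, b2, b3⟩ := hsupp _ _ _ _ hq
        simp only [Set.mem_ofPred_eq, Prod.fst_sub, Prod.snd_sub]
        refine ⟨b3, fun e => ne1 ⟨?_, ?_⟩, ?_⟩
        · linarith [e.1]
        · linarith [e.2]
        · linear_combination k
      · intro q hq v hv hqv
        obtain ⟨⟨e1, e2⟩, -⟩ := hsupp _ _ _ _ hq
        obtain ⟨⟨f1, f2⟩, -⟩ := hsupp _ _ _ _ hv
        rw [hqv] at e1 e2
        exact Prod.ext (Prod.ext (by linarith) (by linarith)) hqv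
end
end

section
/- Fix n_{⋆,1}, n_{⋆,2}, n_{⋆,3} ∈ ℤ² and reals N₁, N₂, N₃ ≥ 1, and let N_max and N_min be the maximum and minimum of (N₁,N₂,N₃). Let h : (ℤ²)⁴ → {0,1} be the tensor h_{n n₁ n₂ n₃} := 1 if n = n₁ − n₂ + n₃, n₂ ≠ n₁, n₂ ≠ n₃, and N_j ≤ ⟨n_j − n_{⋆,j}⟩ ≤ 2N_j for j = 1,2,3, and h_{n n₁ n₂ n₃} := 0 otherwise. Then there is a universal constant C > 0, independent of n_{⋆,1}, n_{⋆,2}, n_{⋆,3} and of N₁, N₂, N₃, such that ‖h‖₂ ≤ C · N_max · N_min, where ‖h‖₂ := max( ‖h‖_{n→n₁n₂n₃}, ‖h‖_{nn₁→n₂n₃} ). -/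
/-!
Both operator norms are controlled by a Schur test with counting: a kernel bounded by `1`, with at
most `A` nonzero entries in every row and at most `B` in every column, has squared `ℓ² → ℓ²` norm
at most `A * B` (`schur_count`). Each frequency `n_j` ranges over a box with at most `25 N_j²`
lattice points (`card_boxFin`), and the constraint `n = n₁ - n₂ + n₃` removes one frequency.

* Grouping `n → n₁n₂n₃`: the triple `(n₁,n₂,n₃)` determines `n`, so `A = 1`. For fixed `n` two of
  the `n_j` determine the third, so `B ≤ 625 (N_i N_j)²` for any pair `i ≠ j`; a pair containing
  the index of the smallest size is used.
* Grouping `nn₁ → n₂n₃`: for fixed `(n₂,n₃)` the pair `(n,n₁)` is determined by `n₁`, and for fixed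
  `(n,n₁)` the pair `(n₂,n₃)` is determined by either entry. Hence `A ≤ 25 N₁²` and
  `B ≤ 25 min(N₂,N₃)²`.

In both cases the relevant product of sizes is at most `N_max N_min`, and `C = 25` works.
-/


noncomputable section

open scoped ENNReal

/-- The lattice points of the square of half-width `2N` around `a`; it contains the annulus
`N ≤ ⟨n - a⟩ ≤ 2N`. -/
def boxFin (a : ℤ × ℤ) (N : ℝ) : Finset (ℤ × ℤ) :=
  Finset.Icc (a.1 - ⌊2 * N⌋) (a.1 + ⌊2 * N⌋) ×ˢ Finset.Icc (a.2 - ⌊2 * N⌋) (a.2 + ⌊2 * N⌋)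

lemma mem_boxFin {a n : ℤ × ℤ} {N : ℝ} (hN : 1 ≤ N) (h : jbZ (n - a) ≤ 2 * N) :
    n ∈ boxFin a N := by
  have h2 : jbSq (n - a) ≤ (2 * N) ^ 2 := (Real.sqrt_le_left (by linarith)).1 h
  simp only [jbSq, Prod.fst_sub, Prod.snd_sub] at h2
  have key : ∀ z : ℤ, (z : ℝ) ^ 2 ≤ (2 * N) ^ 2 → -⌊2 * N⌋ ≤ z ∧ z ≤ ⌊2 * N⌋ := by
    intro z hz
    have := abs_le.1 (abs_le_of_sq_le_sq hz (by linarith))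
    refine ⟨neg_le.1 (Int.le_floor.2 ?_), Int.le_floor.2 this.2⟩
    push_cast
    linarith
  have k1 := key (n.1 - a.1) (by nlinarith [sq_nonneg (((n.2 - a.2 : ℤ)) : ℝ)])
  have k2 := key (n.2 - a.2) (by nlinarith [sq_nonneg (((n.1 - a.1 : ℤ)) : ℝ)])
  simp only [boxFin, Finset.mem_product, Finset.mem_Icc]
  omega

lemma card_boxFin (a : ℤ × ℤ) {N : ℝ} (hN : 1 ≤ N) :
    ((boxFin a N).card : ℝ) ≤ 25 * N ^ 2 := by
  have h0 : 0 ≤ ⌊2 * N⌋ := Int.floor_nonneg.2 (by linarith)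
  have h1 : (⌊2 * N⌋ : ℝ) ≤ 2 * N := Int.floor_le _
  have hc : ∀ x : ℤ, (((Finset.Icc (x - ⌊2 * N⌋) (x + ⌊2 * N⌋)).card : ℕ) : ℝ) ≤ 5 * N := by
    intro x
    rw [Int.card_Icc]
    have : (((x + ⌊2 * N⌋ + 1 - (x - ⌊2 * N⌋)).toNat : ℤ) : ℝ) = 2 * (⌊2 * N⌋ : ℝ) + 1 := by
      rw [Int.toNat_of_nonneg (by omega)]
      push_cast
      ring
    rw [Int.cast_natCast] at this
    rw [this]
    linarith
  rw [boxFin, Finset.card_product]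
  push_cast
  calc _ ≤ (5 * N) * (5 * N) := by
        gcongr
        · exact hc _
        · exact hc _
    _ = _ := by ring

/-- Schur test for a kernel bounded by `1`, with rows supported in sets `S b` of at most `A`
elements and columns in sets `T a` of at most `B` elements. -/
lemma schur_count {α β : Type*} (K : α → β → ℂ) (S : β → Finset α) (T : α → Finset β)
    (hK : ∀ a b, ‖K a b‖ ≤ 1) (hST : ∀ a b, K a b ≠ 0 → a ∈ S b ∧ b ∈ T a)
    (A B : ℝ) (hA : ∀ b, ((S b).card : ℝ) ≤ A) (hB : ∀ a, ((T a).card : ℝ) ≤ B) (hA0 : 0 ≤ A)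
    (f : α → ℂ) (hf : ∑' a, ‖f a‖ ^ 2 = 1) :
    ∑' b, ENNReal.ofReal (‖∑' a, K a b * f a‖ ^ 2) ≤ ENNReal.ofReal (A * B) := by
  classical
  -- A real `tsum` that is not summable is `0`, so the normalization of `f` gives summability.
  have hsum : Summable fun a => ‖f a‖ ^ 2 := by
    by_contra h
    rw [tsum_eq_zero_of_not_summable h] at hf
    exact zero_ne_one hf
  have hf' : ∑' a, ENNReal.ofReal (‖f a‖ ^ 2) = 1 := by
    rw [← ENNReal.ofReal_tsum_of_nonneg (fun _ => by positivity) hsum, hf, ENNReal.ofReal_one]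
  have hpt : ∀ b, ENNReal.ofReal (‖∑' a, K a b * f a‖ ^ 2) ≤
      ENNReal.ofReal A * ∑' a, ENNReal.ofReal (‖f a‖ ^ 2) * if b ∈ T a then 1 else 0 := by
    intro b
    -- Restrict to the entries that may be nonzero; every remaining `a` satisfies `b ∈ T a`.
    set S' := (S b).filter fun a => b ∈ T a with hS'
    have h1 : ∑' a, K a b * f a = ∑ a ∈ S', K a b * f a := by
      refine tsum_eq_sum fun a ha => ?_
      by_cases h : K a b = 0
      · simp [h]
      · exact absurd (Finset.mem_filter.2 (hST a b h)) ha
    have h2 : ‖∑ a ∈ S', K a b * f a‖ ≤ ∑ a ∈ S', ‖f a‖ := by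
      refine (norm_sum_le _ _).trans (Finset.sum_le_sum fun a _ => ?_)
      rw [norm_mul]
      exact mul_le_of_le_one_left (norm_nonneg _) (hK a b)
    have hcard : (S'.card : ℝ) ≤ A :=
      le_trans (by exact_mod_cast Finset.card_filter_le _ _) (hA b)
    have h3 : ‖∑' a, K a b * f a‖ ^ 2 ≤ A * ∑ a ∈ S', ‖f a‖ ^ 2 := by
      rw [h1]
      calc _ ≤ (∑ a ∈ S', ‖f a‖) ^ 2 := by gcongr
        _ ≤ S'.card * ∑ a ∈ S', ‖f a‖ ^ 2 := sq_sum_le_card_mul_sum_sq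
        _ ≤ _ := by gcongr
    refine (ENNReal.ofReal_le_ofReal h3).trans ?_
    rw [ENNReal.ofReal_mul hA0, ENNReal.ofReal_sum_of_nonneg fun _ _ => by positivity]
    gcongr
    refine le_trans (Finset.sum_le_sum fun a ha => ?_) (ENNReal.sum_le_tsum S')
    simp [(Finset.mem_filter.1 ha).2]
  have hcol : ∀ a, (∑' b, if b ∈ T a then (1 : ℝ≥0∞) else 0) ≤ ENNReal.ofReal B := by
    intro a
    rw [tsum_eq_sum (s := T a) fun b hb => by simp [hb], Finset.sum_ite_mem, Finset.inter_self,
      Finset.sum_const, nsmul_eq_mul, mul_one, ← ENNReal.ofReal_natCast]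
    exact ENNReal.ofReal_le_ofReal (hB a)
  calc _ ≤ ∑' b, ENNReal.ofReal A *
          ∑' a, ENNReal.ofReal (‖f a‖ ^ 2) * if b ∈ T a then 1 else 0 := ENNReal.tsum_le_tsum hpt
    _ = ENNReal.ofReal A *
          ∑' a, ENNReal.ofReal (‖f a‖ ^ 2) * ∑' b, if b ∈ T a then 1 else 0 := by
        rw [ENNReal.tsum_mul_left, ENNReal.tsum_comm]
        simp_rw [ENNReal.tsum_mul_left]
    _ ≤ ENNReal.ofReal A * ∑' a, ENNReal.ofReal (‖f a‖ ^ 2) * ENNReal.ofReal B := by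
        gcongr with a
        exact hcol a
    _ = _ := by rw [ENNReal.tsum_mul_right, hf', one_mul, ENNReal.ofReal_mul hA0]

lemma norm_hTensor_le (a₁ a₂ a₃ : ℤ × ℤ) (N₁ N₂ N₃ : ℝ) (n n₁ n₂ n₃ : ℤ × ℤ) :
    ‖hTensor a₁ a₂ a₃ N₁ N₂ N₃ n n₁ n₂ n₃‖ ≤ 1 := by
  unfold hTensor
  split_ifs <;> simp

lemma hTensor_support {a₁ a₂ a₃ : ℤ × ℤ} {N₁ N₂ N₃ : ℝ} (h₁ : 1 ≤ N₁) (h₂ : 1 ≤ N₂) (h₃ : 1 ≤ N₃)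
    {n n₁ n₂ n₃ : ℤ × ℤ} (h : hTensor a₁ a₂ a₃ N₁ N₂ N₃ n n₁ n₂ n₃ ≠ 0) :
    n = n₁ - n₂ + n₃ ∧ n₁ ∈ boxFin a₁ N₁ ∧ n₂ ∈ boxFin a₂ N₂ ∧ n₃ ∈ boxFin a₃ N₃ := by
  unfold hTensor at h
  split_ifs at h with hc
  · obtain ⟨e, -, -, -, b1, -, b2, -, b3⟩ := hc
    exact ⟨e, mem_boxFin h₁ b1, mem_boxFin h₂ b2, mem_boxFin h₃ b3⟩
  · exact absurd rfl h

lemma rpow_half_le {x : ℝ≥0∞} {c y : ℝ} (hy : 0 ≤ y) (hc : c ≤ y ^ 2)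
    (hx : x ≤ ENNReal.ofReal c) : x ^ ((1 : ℝ) / 2) ≤ ENNReal.ofReal y := by
  calc x ^ ((1 : ℝ) / 2) ≤ (ENNReal.ofReal (y ^ 2)) ^ ((1 : ℝ) / 2) :=
        ENNReal.rpow_le_rpow (hx.trans (ENNReal.ofReal_le_ofReal hc)) (by norm_num)
    _ = ENNReal.ofReal y := by
        rw [ENNReal.ofReal_rpow_of_nonneg (by positivity) (by norm_num), ← Real.sqrt_eq_rpow,
          Real.sqrt_sq hy]

lemma card_image_boxFin_le {γ : Type*} [DecidableEq γ] (g : ℤ × ℤ → γ) (a : ℤ × ℤ) {N : ℝ}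
    (hN : 1 ≤ N) : ((((boxFin a N).image g).card : ℕ) : ℝ) ≤ 25 * N ^ 2 :=
  le_trans (by exact_mod_cast Finset.card_image_le) (card_boxFin a hN)

lemma card_image_boxFin_prod_le {γ : Type*} [DecidableEq γ] (g : (ℤ × ℤ) × (ℤ × ℤ) → γ)
    (a b : ℤ × ℤ) {N M : ℝ} (hN : 1 ≤ N) (hM : 1 ≤ M) :
    ((((boxFin a N ×ˢ boxFin b M).image g).card : ℕ) : ℝ) ≤ (25 * N ^ 2) * (25 * M ^ 2) := by
  refine le_trans (Nat.cast_le.2 Finset.card_image_le) ?_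
  rw [Finset.card_product]
  push_cast
  gcongr
  · exact card_boxFin a hN
  · exact card_boxFin b hM

lemma opNorm_n_le (a₁ a₂ a₃ : ℤ × ℤ) {N₁ N₂ N₃ : ℝ} (h₁ : 1 ≤ N₁) (h₂ : 1 ≤ N₂) (h₃ : 1 ≤ N₃) :
    opNorm_n (hTensor a₁ a₂ a₃ N₁ N₂ N₃)
      ≤ ENNReal.ofReal (25 * (N₁ * min N₂ N₃)) := by
  have hm : 1 ≤ min N₂ N₃ := le_min h₂ h₃
  refine rpow_half_le (c := 1 * ((25 * N₁ ^ 2) * (25 * (min N₂ N₃) ^ 2))) (by positivity)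
    (by ring_nf; rfl) (iSup₂_le fun f hf => ?_)
  rcases le_total N₂ N₃ with h | h
  · refine schur_count (fun n m => hTensor a₁ a₂ a₃ N₁ N₂ N₃ n m.1 m.2.1 m.2.2)
      (fun m => {m.1 - m.2.1 + m.2.2})
      (fun n => (boxFin a₁ N₁ ×ˢ boxFin a₂ N₂).image fun p => (p.1, p.2, n - p.1 + p.2))
      (fun _ _ => norm_hTensor_le ..) ?_ _ _ (by simp)
      (fun n => by rw [min_eq_left h]; exact card_image_boxFin_prod_le _ _ _ h₁ h₂) zero_le_one f hf
    rintro n ⟨n₁, n₂, n₃⟩ hn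
    obtain ⟨rfl, b1, b2, -⟩ := hTensor_support h₁ h₂ h₃ hn
    refine ⟨by simp, Finset.mem_image.2 ⟨(n₁, n₂), Finset.mk_mem_product b1 b2, ?_⟩⟩
    simp only [Prod.mk.injEq, true_and]
    abel
  · refine schur_count (fun n m => hTensor a₁ a₂ a₃ N₁ N₂ N₃ n m.1 m.2.1 m.2.2)
      (fun m => {m.1 - m.2.1 + m.2.2})
      (fun n => (boxFin a₁ N₁ ×ˢ boxFin a₃ N₃).image fun p => (p.1, p.1 + p.2 - n, p.2))
      (fun _ _ => norm_hTensor_le ..) ?_ _ _ (by simp)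
      (fun n => by rw [min_eq_right h]; exact card_image_boxFin_prod_le _ _ _ h₁ h₃)
      zero_le_one f hf
    rintro n ⟨n₁, n₂, n₃⟩ hn
    obtain ⟨rfl, b1, -, b3⟩ := hTensor_support h₁ h₂ h₃ hn
    refine ⟨by simp, Finset.mem_image.2 ⟨(n₁, n₃), Finset.mk_mem_product b1 b3, ?_⟩⟩
    simp only [Prod.mk.injEq, true_and, and_true]
    abel

lemma opNorm_nn1_le (a₁ a₂ a₃ : ℤ × ℤ) {N₁ N₂ N₃ : ℝ} (h₁ : 1 ≤ N₁) (h₂ : 1 ≤ N₂) (h₃ : 1 ≤ N₃) :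
    opNorm_nn1 (hTensor a₁ a₂ a₃ N₁ N₂ N₃)
      ≤ ENNReal.ofReal (25 * (N₁ * min N₂ N₃)) := by
  have hm : 1 ≤ min N₂ N₃ := le_min h₂ h₃
  refine rpow_half_le (c := (25 * N₁ ^ 2) * (25 * (min N₂ N₃) ^ 2)) (by positivity)
    (by ring_nf; rfl) (iSup₂_le fun f hf => ?_)
  rcases le_total N₂ N₃ with h | h
  · refine schur_count (fun q m => hTensor a₁ a₂ a₃ N₁ N₂ N₃ q.1 q.2 m.1 m.2)
      (fun m => (boxFin a₁ N₁).image fun p => (p - m.1 + m.2, p))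
      (fun q => (boxFin a₂ N₂).image fun p => (p, q.1 - q.2 + p))
      (fun _ _ => norm_hTensor_le ..) ?_ _ _ (fun _ => card_image_boxFin_le _ _ h₁)
      (fun n => by rw [min_eq_left h]; exact card_image_boxFin_le _ _ h₂) (by positivity) f hf
    rintro ⟨n, n₁⟩ ⟨n₂, n₃⟩ hn
    dsimp only at hn ⊢
    obtain ⟨rfl, b1, b2, -⟩ := hTensor_support h₁ h₂ h₃ hn
    refine ⟨Finset.mem_image.2 ⟨n₁, b1, rfl⟩, Finset.mem_image.2 ⟨n₂, b2, ?_⟩⟩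
    simp only [Prod.mk.injEq, true_and]
    abel
  · refine schur_count (fun q m => hTensor a₁ a₂ a₃ N₁ N₂ N₃ q.1 q.2 m.1 m.2)
      (fun m => (boxFin a₁ N₁).image fun p => (p - m.1 + m.2, p))
      (fun q => (boxFin a₃ N₃).image fun p => (q.2 - q.1 + p, p))
      (fun _ _ => norm_hTensor_le ..) ?_ _ _ (fun _ => card_image_boxFin_le _ _ h₁)
      (fun n => by rw [min_eq_right h]; exact card_image_boxFin_le _ _ h₃) (by positivity) f hf
    rintro ⟨n, n₁⟩ ⟨n₂, n₃⟩ hn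
    dsimp only at hn ⊢
    obtain ⟨rfl, b1, -, b3⟩ := hTensor_support h₁ h₂ h₃ hn
    refine ⟨Finset.mem_image.2 ⟨n₁, b1, rfl⟩, Finset.mem_image.2 ⟨n₃, b3, ?_⟩⟩
    simp only [Prod.mk.injEq, and_true]
    abel

/-- Lemma 4.3 (i): `‖h‖₂ ≲ N_max N_min`, uniformly in the centers and the dyadic sizes. -/
theorem tensor_bound_II_i :
    ∃ C > (0 : ℝ), ∀ (a₁ a₂ a₃ : ℤ × ℤ) (N₁ N₂ N₃ : ℝ),
      1 ≤ N₁ → 1 ≤ N₂ → 1 ≤ N₃ →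
      tNorm2 (hTensor a₁ a₂ a₃ N₁ N₂ N₃)
        ≤ ENNReal.ofReal (C * max N₁ (max N₂ N₃) * min N₁ (min N₂ N₃)) := by
  refine ⟨25, by norm_num, fun a₁ a₂ a₃ N₁ N₂ N₃ h₁ h₂ h₃ => ?_⟩
  have hm : 1 ≤ min N₂ N₃ := le_min h₂ h₃
  -- One of the two factors `N₁`, `min N₂ N₃` is the overall minimum.
  have key : N₁ * min N₂ N₃ ≤ max N₁ (max N₂ N₃) * min N₁ (min N₂ N₃) := by
    rcases le_total N₁ (min N₂ N₃) with h | h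
    · rw [min_eq_left h, mul_comm]
      gcongr
      exact (min_le_max).trans (le_max_right _ _)
    · rw [min_eq_right h]
      gcongr
      exact le_max_left _ _
  have hle : ENNReal.ofReal (25 * (N₁ * min N₂ N₃)) ≤
      ENNReal.ofReal (25 * max N₁ (max N₂ N₃) * min N₁ (min N₂ N₃)) := by
    refine ENNReal.ofReal_le_ofReal ?_
    rw [mul_assoc]
    gcongr
  exact max_le ((opNorm_n_le a₁ a₂ a₃ h₁ h₂ h₃).trans hle)
    ((opNorm_nn1_le a₁ a₂ a₃ h₁ h₂ h₃).trans hle)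
end
end
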